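/- Let G be a finite group and g1, g2 ∈ G two non-identity elements. Then the simplified Frucht graph Γ_{G,g1,g2} admits a proper 3-edge colouring; concretely, the colouring assigning colour red to the edges {(1,g),(2,g)}, {(3,g),(4,g·g1)}, {(5,g),(6,g·g2)}, colour green to the edges {(2,g),(3,g)}, {(1,g),(4,g)}, {(5,g),(6,g)}, and colour blue to the edges {(1,g),(3,g)}, {(2,g),(6,g)}, {(4,g),(5,g)} (for all g ∈ G) is a proper 3-edge colouring. -/

import Mathlib

/-- The simplified Frucht graph `Γ_{G,g1,g2}`: vertex set `{1,…,6} × G` (labels `1,…,6`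
are encoded as `0,…,5 : Fin 6`), with edges, for every `g ∈ G`:
`{(1,g),(2,g)}, {(2,g),(3,g)}, {(1,g),(3,g)}, {(1,g),(4,g)}, {(2,g),(6,g)},
{(5,g),(6,g)}, {(4,g),(5,g)}`, together with `{(3,g),(4,g·g1)}` and `{(5,g),(6,g·g2)}`. -/
def fruchtGraph (G : Type*) [Group G] (g1 g2 : G) : SimpleGraph (Fin 6 × G) :=
  SimpleGraph.fromEdgeSet (⋃ g : G,
    {s((0, g), (1, g)), s((1, g), (2, g)), s((0, g), (2, g)), s((0, g), (3, g)),
     s((1, g), (5, g)), s((4, g), (5, g)), s((3, g), (4, g)),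
     s((2, g), (3, g * g1)), s((4, g), (5, g * g2))})

/-- The simplified Frucht graph admits a proper `3`-edge colouring (colours
`0 = red, 1 = green, 2 = blue`): red on the edges `{(1,g),(2,g)}`, `{(3,g),(4,g·g1)}`,
`{(5,g),(6,g·g2)}`, green on `{(2,g),(3,g)}`, `{(1,g),(4,g)}`, `{(5,g),(6,g)}`, and
blue on `{(1,g),(3,g)}`, `{(2,g),(6,g)}`, `{(4,g),(5,g)}`; any two distinct edges
sharing a vertex receive different colours. -/
theorem fruchtGraph_proper_three_edge_colouring
    (G : Type*) [Group G] [Fintype G] (g1 g2 : G) (h1 : g1 ≠ 1) (h2 : g2 ≠ 1) :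
    ∃ c : Sym2 (Fin 6 × G) → Fin 3,
      (∀ g : G,
        c s((0, g), (1, g)) = 0 ∧
        c s((2, g), (3, g * g1)) = 0 ∧
        c s((4, g), (5, g * g2)) = 0 ∧
        c s((1, g), (2, g)) = 1 ∧
        c s((0, g), (3, g)) = 1 ∧
        c s((4, g), (5, g)) = 1 ∧
        c s((0, g), (2, g)) = 2 ∧
        c s((1, g), (5, g)) = 2 ∧
        c s((3, g), (4, g)) = 2) ∧
      ∀ e₁ ∈ (fruchtGraph G g1 g2).edgeSet, ∀ e₂ ∈ (fruchtGraph G g1 g2).edgeSet,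
        e₁ ≠ e₂ → (∃ v, v ∈ e₁ ∧ v ∈ e₂) → c e₁ ≠ c e₂ := by
  classical
  let R : Sym2 (Fin 6 × G) → Prop := fun e => ∃ g : G,
    e = s((0, g), (1, g)) ∨ e = s((2, g), (3, g * g1)) ∨ e = s((4, g), (5, g * g2))
  let Q : Sym2 (Fin 6 × G) → Prop := fun e => ∃ g : G,
    e = s((1, g), (2, g)) ∨ e = s((0, g), (3, g)) ∨ e = s((4, g), (5, g))
  let B : Sym2 (Fin 6 × G) → Prop := fun e => ∃ g : G,
    e = s((0, g), (2, g)) ∨ e = s((1, g), (5, g)) ∨ e = s((3, g), (4, g))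
  let c : Sym2 (Fin 6 × G) → Fin 3 := fun e => if R e then 0 else if Q e then 1 else 2
  have hRQ : ∀ e, Q e → ¬ R e := by
    rintro e ⟨g, rfl | rfl | rfl⟩ ⟨h, h' | h' | h'⟩ <;> simp at h'
    obtain ⟨rfl, h'⟩ := h'
    exact h2 (by simpa using h')
  have hRB : ∀ e, B e → ¬ R e := by
    rintro e ⟨g, rfl | rfl | rfl⟩ ⟨h, h' | h' | h'⟩ <;> simp at h'
  have hQB : ∀ e, B e → ¬ Q e := by
    rintro e ⟨g, rfl | rfl | rfl⟩ ⟨h, h' | h' | h'⟩ <;> simp at h'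
  have cR : ∀ e, R e → c e = 0 := fun e h => by simp only [c, if_pos h]
  have cQ : ∀ e, Q e → c e = 1 := fun e h => by simp only [c, if_neg (hRQ e h), if_pos h]
  have cB : ∀ e, B e → c e = 2 := fun e h => by
    simp only [c, if_neg (hRB e h), if_neg (hQB e h)]
  have pR : ∀ e f, R e → R f → (∃ v, v ∈ e ∧ v ∈ f) → e = f := by
    rintro e f ⟨g, rfl | rfl | rfl⟩ ⟨h, rfl | rfl | rfl⟩ ⟨⟨i, x⟩, he, hf⟩ <;>
      simp only [Sym2.mem_iff, Prod.mk.injEq] at he hf <;>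
      rcases he with ⟨rfl, rfl⟩ | ⟨rfl, rfl⟩ <;> simp at hf <;> simp [hf]
  have pQ : ∀ e f, Q e → Q f → (∃ v, v ∈ e ∧ v ∈ f) → e = f := by
    rintro e f ⟨g, rfl | rfl | rfl⟩ ⟨h, rfl | rfl | rfl⟩ ⟨⟨i, x⟩, he, hf⟩ <;>
      simp only [Sym2.mem_iff, Prod.mk.injEq] at he hf <;>
      rcases he with ⟨rfl, rfl⟩ | ⟨rfl, rfl⟩ <;> simp at hf <;> simp [hf]
  have pB : ∀ e f, B e → B f → (∃ v, v ∈ e ∧ v ∈ f) → e = f := by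
    rintro e f ⟨g, rfl | rfl | rfl⟩ ⟨h, rfl | rfl | rfl⟩ ⟨⟨i, x⟩, he, hf⟩ <;>
      simp only [Sym2.mem_iff, Prod.mk.injEq] at he hf <;>
      rcases he with ⟨rfl, rfl⟩ | ⟨rfl, rfl⟩ <;> simp at hf <;> simp [hf]
  have key : ∀ e ∈ (fruchtGraph G g1 g2).edgeSet, R e ∨ Q e ∨ B e := by
    intro e he
    simp only [fruchtGraph, SimpleGraph.edgeSet_fromEdgeSet, Set.mem_diff, Set.mem_iUnion,
      Set.mem_insert_iff, Set.mem_singleton_iff] at he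
    obtain ⟨⟨g, h⟩, -⟩ := he
    rcases h with h | h | h | h | h | h | h | h | h
    · exact Or.inl ⟨g, by simp only [h, true_or]⟩
    · exact Or.inr (Or.inl ⟨g, Or.inl h⟩)
    · exact Or.inr (Or.inr ⟨g, Or.inl h⟩)
    · exact Or.inr (Or.inl ⟨g, Or.inr (Or.inl h)⟩)
    · exact Or.inr (Or.inr ⟨g, Or.inr (Or.inl h)⟩)
    · exact Or.inr (Or.inl ⟨g, Or.inr (Or.inr h)⟩)
    · exact Or.inr (Or.inr ⟨g, Or.inr (Or.inr h)⟩)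
    · exact Or.inl ⟨g, Or.inr (Or.inl h)⟩
    · exact Or.inl ⟨g, Or.inr (Or.inr h)⟩
  refine ⟨c, fun g => ⟨cR _ ⟨g, Or.inl rfl⟩, cR _ ⟨g, Or.inr (Or.inl rfl)⟩,
    cR _ ⟨g, Or.inr (Or.inr rfl)⟩, cQ _ ⟨g, Or.inl rfl⟩, cQ _ ⟨g, Or.inr (Or.inl rfl)⟩,
    cQ _ ⟨g, Or.inr (Or.inr rfl)⟩, cB _ ⟨g, Or.inl rfl⟩, cB _ ⟨g, Or.inr (Or.inl rfl)⟩,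
    cB _ ⟨g, Or.inr (Or.inr rfl)⟩⟩, ?_⟩
  intro e he f hf hne hv
  rcases key e he with h | h | h <;> rcases key f hf with h' | h' | h'
  · exact absurd (pR e f h h' hv) hne
  · rw [cR e h, cQ f h']; decide
  · rw [cR e h, cB f h']; decide
  · rw [cQ e h, cR f h']; decide
  · exact absurd (pQ e f h h' hv) hne
  · rw [cQ e h, cB f h']; decide
  · rw [cB e h, cR f h']; decide
  · rw [cB e h, cQ f h']; decide
  · exact absurd (pB e f h h' hv) hne
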